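/- Let (d_n) and (ε_n) be sequences such that ε_n → 0 and d*_n := min(d_n, n − d_n) → ∞. Then for every δ > 0, with high probability D ~ 𝔻(n, d_n/n) has the property that for every bisection c : V(D) → {1,2}, there are at most δn vertices v with 0 < def(v;c) ≤ ε_n·√(d*_n). -/

import Mathlib

open MeasureTheory Filter

/-- Bernoulli measure on `Bool` with parameter `p`. -/
noncomputable def bernoulliM (p : ℝ) : Measure Bool :=
  (Real.toNNReal p) • Measure.dirac true + (Real.toNNReal (1 - p)) • Measure.dirac false

instance (p : ℝ) : IsFiniteMeasure (bernoulliM p) := by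
  unfold bernoulliM; infer_instance

/-- The binomial random digraph measure `𝔻(n,p)`: each of the `n(n-1)` possible arcs
(ordered pairs of distinct vertices) is present independently with probability `p`
(the diagonal entries of the matrix are ignored, via `DiAdj`). -/
noncomputable def diMeasure (n : ℕ) (p : ℝ) : Measure (Fin n → Fin n → Bool) :=
  Measure.pi fun _ => Measure.pi fun _ => bernoulliM p

/-- The arc relation of the digraph encoded by the matrix `A`. -/
def DiAdj {n : ℕ} (A : Fin n → Fin n → Bool) (v w : Fin n) : Prop :=
  v ≠ w ∧ A v w = true

/-- A vertex `v` is *majority-coloured* with respect to the colouring `c` if at most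
half of its out-neighbours have the same colour as `v`. -/
def MajorityAt {n : ℕ} {α : Type*} (A : Fin n → Fin n → Bool) (c : Fin n → α) (v : Fin n) :
    Prop :=
  2 * ({w | DiAdj A v w ∧ c w = c v} : Set (Fin n)).ncard ≤
    ({w | DiAdj A v w} : Set (Fin n)).ncard

/-- A red-blue colouring of `Fin n` is a *bisection* if its two colour classes
differ in size by at most 1. -/
def IsBisection {n : ℕ} (c : Fin n → Bool) : Prop :=
  |(({v | c v = true} : Set (Fin n)).ncard : ℤ) -
    (({v | c v = false} : Set (Fin n)).ncard : ℤ)| ≤ 1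

open Classical in
/-- The defect of a vertex `v` w.r.t. a 2-colouring `c`: zero if `v` is
majority-coloured, and otherwise the number of same-coloured out-neighbours minus the
number of oppositely-coloured out-neighbours. -/
noncomputable def defectAt {n : ℕ} (A : Fin n → Fin n → Bool) (c : Fin n → Bool)
    (v : Fin n) : ℤ :=
  if MajorityAt A c v then 0
  else (({w | DiAdj A v w ∧ c w = c v} : Set (Fin n)).ncard : ℤ) -
    (({w | DiAdj A v w ∧ c w ≠ c v} : Set (Fin n)).ncard : ℤ)


lemma aux_factor (p t : ℝ) (hp0 : 0 ≤ p) (hp1 : p ≤ 1) (ht : |t| ≤ Real.pi) (s : ℤ)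
    (hs : s = 1 ∨ s = -1) :
    ‖((p : ℂ) * Complex.exp (((t * s : ℝ) : ℂ) * Complex.I) + ((1 - p : ℝ) : ℂ))‖ ≤
      Real.exp (-(2 * p * (1 - p) / Real.pi ^ 2) * t ^ 2) := by
  have hcos := Real.cos_le_one_sub_mul_cos_sq ht
  have hc : Real.cos (t * s) = Real.cos t := by
    rcases hs with rfl | rfl <;> simp
  refine (sq_le_sq₀ (norm_nonneg _) (Real.exp_pos _).le).1 ?_
  rw [Complex.exp_mul_I, ← Complex.ofReal_cos, ← Complex.ofReal_sin, ← Complex.normSq_eq_norm_sq,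
    Complex.normSq_apply]
  simp only [Complex.add_re, Complex.mul_re, Complex.ofReal_re, Complex.ofReal_im, Complex.add_im,
    Complex.mul_im, Complex.I_re, Complex.I_im]
  have h1 := Real.sin_sq_add_cos_sq (t * s)
  rw [hc] at h1
  rw [hc, ← Real.exp_nat_mul]
  have hpq : 0 ≤ 2 * p * (1 - p) := by
    have : 0 ≤ 1 - p := by linarith
    positivity
  have h2 := mul_le_mul_of_nonneg_left hcos hpq
  have h3 := Real.add_one_le_exp (((2 : ℕ) : ℝ) * (-(2 * p * (1 - p) / Real.pi ^ 2) * t ^ 2))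
  refine le_trans ?_ h3
  have h4 : (((2 : ℕ) : ℝ) * (-(2 * p * (1 - p) / Real.pi ^ 2) * t ^ 2)) =
    - (2 * p * (1 - p) * (2 / Real.pi ^ 2 * t ^ 2)) := by push_cast; ring
  rw [h4]
  nlinarith

lemma aux_orth (m : ℤ) :
    ∫ t in (-Real.pi)..Real.pi, Complex.exp (((t * m : ℝ) : ℂ) * Complex.I) =
      if m = 0 then (2 * Real.pi : ℂ) else 0 := by
  split_ifs with h
  · subst h
    simp; ring
  · have hm : (m : ℂ) * Complex.I ≠ 0 := by simp [h]
    have := integral_exp_mul_complex (a := -Real.pi) (b := Real.pi) hm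
    have e : ∀ t : ℝ, Complex.exp (((t * m : ℝ) : ℂ) * Complex.I) =
      Complex.exp ((m : ℂ) * Complex.I * t) := by intro t; congr 1; push_cast; ring
    simp_rw [e]
    rw [this, div_eq_zero_iff, sub_eq_zero]
    left
    rw [Complex.exp_eq_exp_iff_exists_int]
    exact ⟨m, by push_cast; ring⟩

/-- Weight of a row. -/
noncomputable def rowW {n : ℕ} (p : ℝ) (f : Fin n → Bool) : ℝ :=
  ∏ i, if f i then p else 1 - p

def rowZ {n : ℕ} (s : Fin n → ℤ) (f : Fin n → Bool) : ℤ :=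
  ∑ i, if f i then s i else 0

lemma aux_char {n : ℕ} (p t : ℝ) (s : Fin n → ℤ) :
    ∑ f : Fin n → Bool, (rowW p f : ℂ) * Complex.exp (((t * rowZ s f : ℝ) : ℂ) * Complex.I) =
      ∏ i, ((p : ℂ) * Complex.exp (((t * s i : ℝ) : ℂ) * Complex.I) + ((1 - p : ℝ) : ℂ)) := by
  have := Finset.prod_univ_sum (fun _ : Fin n => (Finset.univ : Finset Bool))
    (fun i b => if b then (p : ℂ) * Complex.exp (((t * s i : ℝ) : ℂ) * Complex.I)
      else ((1 - p : ℝ) : ℂ))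
  simp only [Fintype.sum_bool, if_true, Fintype.piFinset_univ, Bool.false_eq_true, if_false] at this
  rw [this]
  apply Finset.sum_congr rfl
  intro f _
  have h1 : (((t * rowZ s f : ℝ) : ℂ) * Complex.I) =
      ∑ i, if f i then (((t * s i : ℝ) : ℂ) * Complex.I) else 0 := by
    unfold rowZ
    push_cast
    rw [Finset.mul_sum, Finset.sum_mul]
    apply Finset.sum_congr rfl
    intro i _
    split_ifs <;> simp
  rw [h1, Complex.exp_sum]
  unfold rowW
  push_cast
  rw [← Finset.prod_mul_distrib]
  apply Finset.prod_congr rfl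
  intro i _
  split_ifs <;> simp

lemma aux_point {n : ℕ} (p : ℝ) (hp0 : 0 < p) (hp1 : p < 1) (hn : 2 ≤ n) (s : Fin n → ℤ)
    (v : Fin n) (hv : s v = 0) (hs : ∀ w, w ≠ v → s w = 1 ∨ s w = -1) (k : ℤ) :
    ∑ f : Fin n → Bool, (if rowZ s f = k then rowW p f else 0) ≤
      (1 / (2 * Real.pi)) *
        Real.sqrt (Real.pi / (((n : ℝ) - 1) * (2 * p * (1 - p) / Real.pi ^ 2))) := by
  set b := ((n : ℝ) - 1) * (2 * p * (1 - p) / Real.pi ^ 2) with hb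
  have hn' : (2 : ℝ) ≤ n := by exact_mod_cast hn
  have hbpos : 0 < b := by
    have : 0 < (n : ℝ) - 1 := by linarith
    have : 0 < 1 - p := by linarith
    positivity
  set S := ∑ f : Fin n → Bool, (if rowZ s f = k then rowW p f else 0) with hS
  let G : ℝ → ℂ := fun t => ∏ i, ((p : ℂ) * Complex.exp (((t * s i : ℝ) : ℂ) * Complex.I) + ((1 - p : ℝ) : ℂ))
  have key : ((2 * Real.pi * S : ℝ) : ℂ) = ∫ t in (-Real.pi)..Real.pi,
      Complex.exp (((t * (-k : ℤ) : ℝ) : ℂ) * Complex.I) * G t := by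
    have e : ∀ t : ℝ, Complex.exp (((t * (-k : ℤ) : ℝ) : ℂ) * Complex.I) * G t =
        ∑ f : Fin n → Bool, (rowW p f : ℂ) *
          Complex.exp (((t * (rowZ s f - k : ℤ) : ℝ) : ℂ) * Complex.I) := by
      intro t
      simp only [G]
      rw [← aux_char, Finset.mul_sum]
      apply Finset.sum_congr rfl
      intro f _
      rw [mul_left_comm, ← Complex.exp_add]
      congr 2
      push_cast
      ring
    simp_rw [e]
    rw [intervalIntegral.integral_finsetSum]
    · simp_rw [intervalIntegral.integral_const_mul, aux_orth]
      rw [hS]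
      push_cast
      rw [Finset.mul_sum]
      apply Finset.sum_congr rfl
      intro f _
      by_cases h : rowZ s f = k
      · simp [h]; ring
      · simp [h, sub_eq_zero]
    · intro f _
      apply Continuous.intervalIntegrable
      fun_prop
  have hG : ∀ t ∈ Set.Ioc (-Real.pi) Real.pi,
      ‖Complex.exp (((t * (-k : ℤ) : ℝ) : ℂ) * Complex.I) * G t‖ ≤ Real.exp (-b * t ^ 2) := by
    intro t ht
    have ht' : |t| ≤ Real.pi := abs_le.2 ⟨ht.1.le, ht.2⟩
    rw [norm_mul, Complex.norm_exp_ofReal_mul_I, one_mul]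
    simp only [G]
    rw [norm_prod, ← Finset.mul_prod_erase _ _ (Finset.mem_univ v), hv]
    have h0 : ‖(p : ℂ) * Complex.exp (((t * ((0 : ℤ) : ℝ) : ℝ) : ℂ) * Complex.I) + ((1 - p : ℝ) : ℂ)‖ = 1 := by
      simp
    rw [h0, one_mul]
    calc _ ≤ ∏ i ∈ Finset.univ.erase v, Real.exp (-(2 * p * (1 - p) / Real.pi ^ 2) * t ^ 2) := by
          apply Finset.prod_le_prod
          · intros; positivity
          · intro i hi
            exact aux_factor p t hp0.le hp1.le ht' (s i) (hs i (Finset.ne_of_mem_erase hi))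
      _ = _ := by
          rw [Finset.prod_const, ← Real.exp_nat_mul, Finset.card_erase_of_mem (Finset.mem_univ v)]
          simp only [Finset.card_univ, Fintype.card_fin]
          rw [Nat.cast_sub (by omega), hb]
          congr 1
          push_cast
          ring
  have hpi := Real.pi_pos
  have hnorm : ‖((2 * Real.pi * S : ℝ) : ℂ)‖ ≤ Real.sqrt (Real.pi / b) := by
    rw [key, ← integral_gaussian]
    refine (intervalIntegral.norm_integral_le_of_norm_le (by linarith)
      (g := fun t => Real.exp (-b * t ^ 2)) (Filter.Eventually.of_forall hG) ?_).trans ?_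
    · apply Continuous.intervalIntegrable
      fun_prop
    · rw [intervalIntegral.integral_of_le (by linarith)]
      exact setIntegral_le_integral (integrable_exp_neg_mul_sq hbpos)
        (Filter.Eventually.of_forall fun t => (Real.exp_pos _).le)
  rw [Complex.norm_real] at hnorm
  have h5 := (le_abs_self _).trans hnorm
  rw [one_div, ← div_eq_inv_mul, le_div_iff₀ (by positivity)]
  linarith

lemma aux_bern_prob (p : ℝ) (hp0 : 0 ≤ p) (hp1 : p ≤ 1) : IsProbabilityMeasure (bernoulliM p) := by
  constructor
  unfold bernoulliM
  simp only [Measure.coe_add, Measure.coe_nnreal_smul_apply, Pi.add_apply, measure_univ, mul_one]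
  rw [← ENNReal.coe_add, ← Real.toNNReal_add hp0 (by linarith)]
  simp

lemma aux_bern_singleton (p : ℝ) (b : Bool) :
    bernoulliM p {b} = ENNReal.ofReal (if b then p else 1 - p) := by
  unfold bernoulliM
  cases b <;> simp [ENNReal.ofReal]

lemma aux_row_measure {n : ℕ} (p : ℝ) (hp0 : 0 ≤ p) (hp1 : p ≤ 1) (s : Fin n → ℤ) (k : ℤ) :
    Measure.pi (fun _ : Fin n => bernoulliM p) {f | rowZ s f = k} =
      ENNReal.ofReal (∑ f : Fin n → Bool, (if rowZ s f = k then rowW p f else 0)) := by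
  have hnn : ∀ b : Bool, 0 ≤ (if b then p else 1 - p) := by
    intro b; split_ifs <;> linarith
  have hW : ∀ f : Fin n → Bool, 0 ≤ rowW p f := fun f => Finset.prod_nonneg fun i _ => hnn (f i)
  have e : ({f | rowZ s f = k} : Set (Fin n → Bool)) =
      ((Finset.univ.filter fun f => rowZ s f = k : Finset (Fin n → Bool)) : Set (Fin n → Bool)) := by
    ext; simp
  rw [e, ← sum_measure_singleton, ← Finset.sum_filter, ENNReal.ofReal_sum_of_nonneg (fun f _ => hW f)]
  apply Finset.sum_congr rfl
  intro f _
  rw [Measure.pi_singleton]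
  unfold rowW
  rw [ENNReal.ofReal_prod_of_nonneg (fun i _ => hnn (f i))]
  exact Finset.prod_congr rfl fun i _ => aux_bern_singleton p (f i)

lemma aux_row_interval {n : ℕ} (p : ℝ) (hp0 : 0 < p) (hp1 : p < 1) (hn : 2 ≤ n) (s : Fin n → ℤ)
    (v : Fin n) (hv : s v = 0) (hs : ∀ w, w ≠ v → s w = 1 ∨ s w = -1) (D : ℝ) (hD : 0 < D)
    (hDp : D / 4 ≤ ((n : ℝ) - 1) * (p * (1 - p))) (e : ℝ) (he : 0 ≤ e) :
    Measure.pi (fun _ : Fin n => bernoulliM p)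
      {f | 0 < rowZ s f ∧ (rowZ s f : ℝ) ≤ e * Real.sqrt D} ≤ ENNReal.ofReal (2 * e) := by
  have hpi := Real.pi_pos
  have hsD : 0 < Real.sqrt D := Real.sqrt_pos.2 hD
  set M := ((n : ℝ) - 1) * (p * (1 - p)) with hM
  have hMpos : 0 < M := by linarith
  have hpt : ∀ k : ℤ, Measure.pi (fun _ : Fin n => bernoulliM p) {f | rowZ s f = k} ≤
      ENNReal.ofReal (2 / Real.sqrt D) := by
    intro k
    rw [aux_row_measure p hp0.le hp1.le]
    apply ENNReal.ofReal_le_ofReal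
    refine (aux_point p hp0 hp1 hn s v hv hs k).trans ?_
    have h1 : Real.pi / (((n : ℝ) - 1) * (2 * p * (1 - p) / Real.pi ^ 2)) =
        Real.pi ^ 3 / (2 * M) := by
      have : ((n : ℝ) - 1) * (2 * p * (1 - p) / Real.pi ^ 2) = 2 * M / Real.pi ^ 2 := by
        rw [hM]; ring
      rw [this]
      field_simp
    rw [h1]
    have h2 : Real.sqrt (Real.pi ^ 3 / (2 * M)) ≤ 4 * Real.pi / Real.sqrt D := by
      apply Real.sqrt_le_iff.2
      refine ⟨by positivity, ?_⟩
      rw [div_pow, Real.sq_sqrt hD.le, div_le_div_iff₀ (by positivity) hD]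
      have h4 : Real.pi * D ≤ 4 * D := mul_le_mul_of_nonneg_right Real.pi_le_four hD.le
      have h5 : Real.pi * D ≤ 32 * M := by linarith
      nlinarith [mul_le_mul_of_nonneg_left h5 (sq_nonneg Real.pi)]
    calc _ ≤ 1 / (2 * Real.pi) * (4 * Real.pi / Real.sqrt D) := by gcongr
      _ = _ := by field_simp; norm_num
  have hsub : {f : Fin n → Bool | 0 < rowZ s f ∧ (rowZ s f : ℝ) ≤ e * Real.sqrt D} ⊆
      ⋃ k ∈ Finset.Icc (1 : ℤ) ⌊e * Real.sqrt D⌋, {f | rowZ s f = k} := by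
    intro f hf
    simp only [Set.mem_iUnion, Set.mem_ofPred_eq, Finset.mem_Icc, exists_prop]
    exact ⟨rowZ s f, ⟨hf.1, Int.le_floor.2 hf.2⟩, rfl⟩
  refine (measure_mono hsub).trans ((measure_biUnion_finset_le _ _).trans ?_)
  refine (Finset.sum_le_sum fun k _ => hpt k).trans ?_
  rw [Finset.sum_const, nsmul_eq_mul, Int.card_Icc, ← ENNReal.ofReal_natCast,
    ← ENNReal.ofReal_mul (by positivity)]
  apply ENNReal.ofReal_le_ofReal
  have hfl : 0 ≤ ⌊e * Real.sqrt D⌋ := Int.floor_nonneg.2 (by positivity)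
  have hc : ((⌊e * Real.sqrt D⌋ + 1 - 1).toNat : ℝ) ≤ e * Real.sqrt D := by
    have h1 : ((⌊e * Real.sqrt D⌋ + 1 - 1).toNat : ℤ) = ⌊e * Real.sqrt D⌋ := by omega
    have h2 : ((⌊e * Real.sqrt D⌋ + 1 - 1).toNat : ℝ) = (⌊e * Real.sqrt D⌋ : ℝ) := by
      exact_mod_cast h1
    rw [h2]
    exact Int.floor_le _
  calc _ ≤ e * Real.sqrt D * (2 / Real.sqrt D) := by gcongr
    _ = _ := by field_simp

/-- The sign vector of the row of `v`. -/
def rowS {n : ℕ} (c : Fin n → Bool) (v w : Fin n) : ℤ :=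
  if w = v then 0 else if c w = c v then 1 else -1

lemma aux_defect {n : ℕ} (A : Fin n → Fin n → Bool) (c : Fin n → Bool) (v : Fin n)
    (h : 0 < defectAt A c v) : defectAt A c v = rowZ (rowS c v) (A v) := by
  classical
  unfold defectAt at h ⊢
  split_ifs at h ⊢ with hm
  · exact absurd h (lt_irrefl _)
  · have e1 : ({w | DiAdj A v w ∧ c w = c v} : Set (Fin n)) =
        ((Finset.univ.filter fun w => DiAdj A v w ∧ c w = c v : Finset (Fin n)) : Set (Fin n)) := by
      ext; simp
    have e2 : ({w | DiAdj A v w ∧ c w ≠ c v} : Set (Fin n)) =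
        ((Finset.univ.filter fun w => DiAdj A v w ∧ c w ≠ c v : Finset (Fin n)) : Set (Fin n)) := by
      ext; simp
    rw [e1, e2, Set.ncard_coe_finset, Set.ncard_coe_finset, Finset.card_filter, Finset.card_filter]
    push_cast
    rw [← Finset.sum_sub_distrib]
    unfold rowZ rowS DiAdj
    apply Finset.sum_congr rfl
    intro w _
    by_cases h1 : w = v
    · simp [h1]
    · have h1' : v ≠ w := fun h => h1 h.symm
      by_cases h2 : A v w = true <;> by_cases h3 : c w = c v <;> simp [h1, h1', h2, h3]

lemma aux_union {n : ℕ} (p : ℝ) (hp0 : 0 < p) (hp1 : p < 1) (hn : 2 ≤ n) (D : ℝ) (hD : 0 < D)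
    (hDp : D / 4 ≤ ((n : ℝ) - 1) * (p * (1 - p))) (e x δ η : ℝ) (he : 0 ≤ e) (hx : x ≤ e)
    (hη : 0 < η) (hη1 : η ≤ 1) (heη : 2 * e ≤ η) (hηδ : η ^ δ ≤ 1 / 8) :
    diMeasure n p {A | ∀ c : Fin n → Bool, IsBisection c →
          ((({v | 0 < defectAt A c v ∧
              (defectAt A c v : ℝ) ≤ x * Real.sqrt D} :
            Set (Fin n)).ncard : ℝ)) ≤ δ * n}ᶜ ≤ ENNReal.ofReal ((1 / 2) ^ n) := by
  classical
  have := aux_bern_prob p hp0.le hp1.le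
  let B : (Fin n → Bool) → Fin n → Set (Fin n → Bool) := fun c v =>
    {f | 0 < rowZ (rowS c v) f ∧ (rowZ (rowS c v) f : ℝ) ≤ e * Real.sqrt D}
  let I : Finset ((Fin n → Bool) × Finset (Fin n)) :=
    Finset.univ.filter fun q => δ * n < (q.2.card : ℝ)
  let E : ((Fin n → Bool) × Finset (Fin n)) → Set (Fin n → Fin n → Bool) := fun q =>
    Set.pi Set.univ fun v => if v ∈ q.2 then B q.1 v else Set.univ
  have hsub : {A | ∀ c : Fin n → Bool, IsBisection c →
          ((({v | 0 < defectAt A c v ∧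
              (defectAt A c v : ℝ) ≤ x * Real.sqrt D} :
            Set (Fin n)).ncard : ℝ)) ≤ δ * n}ᶜ ⊆ ⋃ q ∈ I, E q := by
    intro A hA
    simp only [Set.mem_compl_iff, Set.mem_ofPred_eq, not_forall, not_le] at hA
    obtain ⟨c, -, hA⟩ := hA
    simp only [Set.mem_iUnion, exists_prop]
    refine ⟨(c, Finset.univ.filter fun v => 0 < defectAt A c v ∧
              (defectAt A c v : ℝ) ≤ x * Real.sqrt D), ?_, ?_⟩
    · simp only [I, Finset.mem_filter, Finset.mem_univ, true_and]
      rw [← Set.ncard_coe_finset, Finset.coe_filter]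
      simpa using hA
    · intro v _
      simp only [Finset.mem_filter, Finset.mem_univ, true_and]
      split_ifs with h
      · refine ⟨?_, ?_⟩
        · rw [← aux_defect A c v h.1]; exact h.1
        · rw [← aux_defect A c v h.1]
          exact h.2.trans (mul_le_mul_of_nonneg_right hx (Real.sqrt_nonneg _))
      · trivial
  have hE : ∀ q ∈ I, diMeasure n p (E q) ≤ ENNReal.ofReal ((1 / 8) ^ n) := by
    intro q hq
    simp only [I, Finset.mem_filter, Finset.mem_univ, true_and] at hq
    unfold diMeasure
    simp only [E]
    rw [Measure.pi_pi]
    calc _ ≤ ∏ v, (if v ∈ q.2 then ENNReal.ofReal η else 1) := by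
          apply Finset.prod_le_prod'
          intro v _
          split_ifs with h
          · refine (aux_row_interval p hp0 hp1 hn (rowS q.1 v) v (by simp [rowS]) ?_ D hD hDp e he).trans
              (ENNReal.ofReal_le_ofReal heη)
            intro w hw
            unfold rowS
            rw [if_neg hw]
            split_ifs <;> simp
          · simp
      _ = ENNReal.ofReal (η ^ q.2.card) := by
          rw [Finset.prod_ite_mem, Finset.univ_inter, Finset.prod_const, ENNReal.ofReal_pow hη.le]
      _ ≤ _ := by
          apply ENNReal.ofReal_le_ofReal
          rw [← Real.rpow_natCast]
          calc η ^ (q.2.card : ℝ) ≤ η ^ (δ * n) :=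
                Real.rpow_le_rpow_of_exponent_ge hη hη1 hq.le
            _ = (η ^ δ) ^ n := by rw [Real.rpow_mul hη.le, Real.rpow_natCast]
            _ ≤ _ := by gcongr
  refine (measure_mono hsub).trans ((measure_biUnion_finset_le _ _).trans ?_)
  refine (Finset.sum_le_sum hE).trans ?_
  rw [Finset.sum_const, nsmul_eq_mul, ← ENNReal.ofReal_natCast, ← ENNReal.ofReal_mul (by positivity)]
  apply ENNReal.ofReal_le_ofReal
  have hI : (I.card : ℝ) ≤ 4 ^ n := by
    have h1 : I.card ≤ 4 ^ n := by
      refine (Finset.card_le_univ _).trans ?_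
      simp only [Fintype.card_prod, Fintype.card_fun, Fintype.card_bool, Fintype.card_fin,
        Fintype.card_finset]
      rw [← mul_pow]
      norm_num
    exact_mod_cast h1
  calc _ ≤ (4 : ℝ) ^ n * (1 / 8) ^ n := by gcongr
    _ = _ := by rw [← mul_pow]; norm_num

/-- If `εₙ → 0` and `d*ₙ := min(dₙ, n−dₙ) → ∞`, then for every `δ > 0`, whp
`D ~ 𝔻(n, dₙ/n)` is such that in every bisection there are at most `δ·n` vertices whose
defect lies in `(0, εₙ·√(d*ₙ)]`. -/
theorem whp_few_low_defect_vertices (d : ℕ → ℝ) (eps : ℕ → ℝ)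
    (heps : Tendsto eps atTop (nhds 0))
    (hd : Tendsto (fun n : ℕ => min (d n) ((n : ℝ) - d n)) atTop atTop)
    (δ : ℝ) (hδ : 0 < δ) :
    Tendsto (fun n => diMeasure n (d n / n)
        {A | ∀ c : Fin n → Bool, IsBisection c →
          ((({v | 0 < defectAt A c v ∧
              (defectAt A c v : ℝ) ≤ eps n * Real.sqrt (min (d n) ((n : ℝ) - d n))} :
            Set (Fin n)).ncard : ℝ)) ≤ δ * n})
      atTop (nhds 1) := by
  set D : ℕ → ℝ := fun n => min (d n) ((n : ℝ) - d n) with hDdef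
  set η : ℝ := (1 / 8 : ℝ) ^ (1 / δ) with hη
  have hηpos : 0 < η := by positivity
  have hη1 : η ≤ 1 := Real.rpow_le_one (by norm_num) (by norm_num) (by positivity)
  have hηδ : η ^ δ ≤ 1 / 8 := by
    rw [hη, ← Real.rpow_mul (by norm_num), one_div_mul_cancel hδ.ne', Real.rpow_one]
  have hev : ∀ᶠ n : ℕ in atTop, 1 < D n ∧ |eps n| ≤ η / 2 ∧ 2 ≤ n := by
    have h1 := hd.eventually_gt_atTop 1
    have h2 : ∀ᶠ n in atTop, |eps n| < η / 2 := by
      have := heps.abs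
      rw [abs_zero] at this
      exact this.eventually_lt_const (by positivity)
    filter_upwards [h1, h2, eventually_ge_atTop 2] with n a b c
    exact ⟨a, b.le, c⟩
  have hp : ∀ n : ℕ, 1 < D n → 2 ≤ n → 0 < d n / n ∧ d n / n < 1 ∧
      D n / 4 ≤ ((n : ℝ) - 1) * (d n / n * (1 - d n / n)) := by
    intro n hD hn
    have hn' : (2 : ℝ) ≤ n := by exact_mod_cast hn
    have hnpos : (0 : ℝ) < n := by linarith
    have h1 : D n ≤ d n := min_le_left _ _
    have h2 : D n ≤ n - d n := min_le_right _ _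
    refine ⟨div_pos (by linarith) hnpos, (div_lt_one hnpos).2 (by linarith), ?_⟩
    have h3 : D n * n / 2 ≤ d n * (n - d n) := by
      rcases le_total (d n) (n - d n) with h | h
      · have : D n = d n := min_eq_left h
        rw [this] at hD ⊢; nlinarith
      · have : D n = n - d n := min_eq_right h
        rw [this] at hD ⊢; nlinarith
    have e : ((n : ℝ) - 1) * (d n / n * (1 - d n / n)) = (n - 1) * (d n * (n - d n)) / n ^ 2 := by
      field_simp
    rw [e, div_le_div_iff₀ (by norm_num) (by positivity)]
    have h4 : ((n : ℝ) - 1) * (D n * n / 2) ≤ (n - 1) * (d n * (n - d n)) :=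
      mul_le_mul_of_nonneg_left h3 (by linarith)
    have h5 : (n : ℝ) / 2 * (D n * n / 2) ≤ (n - 1) * (D n * n / 2) := by
      apply mul_le_mul_of_nonneg_right (by linarith)
      have : 0 < D n * n := mul_pos (by linarith) hnpos
      linarith
    nlinarith
  have hlim : Tendsto (fun n : ℕ => 1 - ENNReal.ofReal ((1 / 2 : ℝ) ^ n)) atTop (nhds 1) := by
    have h0 : Tendsto (fun n : ℕ => ENNReal.ofReal ((1 / 2 : ℝ) ^ n)) atTop (nhds 0) := by
      have := ENNReal.tendsto_ofReal
        (tendsto_pow_atTop_nhds_zero_of_lt_one (r := (1 / 2 : ℝ)) (by norm_num) (by norm_num))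
      simpa using this
    have := ENNReal.Tendsto.sub (tendsto_const_nhds (x := (1 : ENNReal)) (f := atTop)) h0 (Or.inl (by simp))
    simpa using this
  refine tendsto_of_tendsto_of_tendsto_of_le_of_le' hlim tendsto_const_nhds ?_ ?_
  · filter_upwards [hev] with n ⟨hD, he, hn⟩
    obtain ⟨hp0, hp1, hDp⟩ := hp n hD hn
    have := aux_bern_prob (d n / n) hp0.le hp1.le
    have : IsProbabilityMeasure (diMeasure n (d n / n)) := by unfold diMeasure; infer_instance
    have hu := aux_union (d n / n) hp0 hp1 hn (D n) (by linarith) hDp |eps n| (eps n) δ η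
      (abs_nonneg _) (le_abs_self _) hηpos hη1 (by linarith) hηδ
    rw [prob_compl_eq_one_sub (Set.toFinite _).measurableSet] at hu
    rw [tsub_le_iff_right] at hu ⊢
    rwa [add_comm]
  · filter_upwards [hev] with n ⟨hD, he, hn⟩
    obtain ⟨hp0, hp1, hDp⟩ := hp n hD hn
    have := aux_bern_prob (d n / n) hp0.le hp1.le
    have : IsProbabilityMeasure (diMeasure n (d n / n)) := by unfold diMeasure; infer_instance
    exact prob_le_one
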